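/- arXiv:2110.04213 — 3 statements merged into one kernel-verified Lean document; each statement's English description precedes it below -/
import Mathlib

section
/- Endow the torus ℝ²/ℤ² with the flat Riemannian metric coming from the standard Euclidean metric of ℝ². For every ε > 0, there exists a finite set of proper closed 1-dimensional subgroups L₁, …, L_N of ℝ²/ℤ² such that every subgroup H of ℝ²/ℤ² which is not ε-dense is contained in one of the L_j. -/
/-- The Euclidean distance on the torus `ℝ²/ℤ²`, induced by the standard Euclidean
metric of `ℝ²` (each factor `AddCircle 1` carries its quotient metric). -/
noncomputable def torusDist
    (x y : AddCircle (1 : ℝ) × AddCircle (1 : ℝ)) : ℝ :=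
  Real.sqrt (dist x.1 y.1 ^ 2 + dist x.2 y.2 ^ 2)

/-!
Let `U` be a nonempty open subset of the torus. Since trigonometric polynomials are uniformly dense,
some trigonometric polynomial `P` has smaller norm at every point outside `U` than its mean over the
torus. If every nontrivial character occurring in `P` were nontrivial on a subgroup `H`, the Haar
measure of the closure of `H`, translated to any coset of `H`, would integrate `P` to the same mean;
so no coset of `H` could miss `U`. Hence every subgroup with a coset missing `U` is killed by one of
the finitely many nontrivial characters occurring in `P`. A subgroup that is not `ε`-dense has a
coset missing the open `ε`-ball around `0`.
-/

open MeasureTheory UnitAddTorus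

section Integration

variable {X 𝕜 : Type*} [RCLike 𝕜] [TopologicalSpace X] [CompactSpace X] [MeasurableSpace X]
  [BorelSpace X]

variable (𝕜) in
/-- Integration against a finite measure, as a continuous linear functional on `C(X, 𝕜)`. -/
noncomputable def integralFunctional (μ : Measure X) [IsFiniteMeasure μ] : C(X, 𝕜) →L[𝕜] 𝕜 :=
  have hint (f : C(X, 𝕜)) : Integrable f μ :=
    f.continuous.integrable_of_hasCompactSupport (HasCompactSupport.of_compactSpace _)
  LinearMap.mkContinuous
    { toFun f := ∫ x, f x ∂μ
      map_add' f g := integral_add (hint f) (hint g)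
      map_smul' c f := integral_const_mul c f }
    (μ.real Set.univ) fun f =>
      (norm_integral_le_of_norm_le_const (.of_forall f.norm_coe_le_norm)).trans_eq (mul_comm _ _)

theorem integralFunctional_apply (μ : Measure X) [IsFiniteMeasure μ] (f : C(X, 𝕜)) :
    integralFunctional 𝕜 μ f = ∫ x, f x ∂μ :=
  rfl

theorem integral_eq_of_mem_span {μ ν : Measure X} [IsFiniteMeasure μ] [IsFiniteMeasure ν]
    {S : Set C(X, 𝕜)} (hS : ∀ f ∈ S, ∫ x, f x ∂μ = ∫ x, f x ∂ν) {f : C(X, 𝕜)}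
    (hf : f ∈ Submodule.span 𝕜 S) : ∫ x, f x ∂μ = ∫ x, f x ∂ν := by
  simp only [← integralFunctional_apply] at hS ⊢
  exact LinearMap.eqOn_span (f := (integralFunctional 𝕜 μ : C(X, 𝕜) →ₗ[𝕜] 𝕜))
    (g := integralFunctional 𝕜 ν) hS hf

theorem exists_mem_norm_le_lt_norm_integral [R1Space X] {D : Set C(X, 𝕜)} (hD : Dense D)
    (μ : Measure X) [IsFiniteMeasure μ] [μ.IsOpenPosMeasure] {U : Set X} (hU : IsOpen U)
    (hne : U.Nonempty) :
    ∃ f ∈ D, ∃ δ < ‖∫ x, f x ∂μ‖, ∀ x ∉ U, ‖f x‖ ≤ δ := by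
  have : CompactSpace ↥Uᶜ := isCompact_iff_compactSpace.mp hU.isClosed_compl.isCompact
  obtain ⟨u, hu⟩ := hne
  obtain ⟨ψ, hψu, -, hψU, hψ⟩ := exists_continuousMap_one_of_isCompact_subset_isOpen
    isCompact_singleton hU (Set.singleton_subset_iff.mpr hu)
  have hψ_pos : 0 < ∫ x, ψ x ∂μ := ψ.continuous.integral_pos_of_hasCompactSupport_nonneg_nonzero
    (HasCompactSupport.of_compactSpace _) (fun x => (hψ x).1) (x := u) (by simp [hψu rfl])
  have hψ_restrict : (ψ.realToRCLike 𝕜).restrict Uᶜ = 0 := by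
    ext x
    simp [image_eq_zero_of_notMem_tsupport fun hx => x.2 (hψU hx)]
  have hopen : IsOpen {f : C(X, 𝕜) | ‖f.restrict Uᶜ‖ < ‖integralFunctional 𝕜 μ f‖} :=
    isOpen_lt (ContinuousMap.continuous_restrict _).norm (integralFunctional 𝕜 μ).continuous.norm
  obtain ⟨f, hf, hfD⟩ := hD.inter_open_nonempty _ hopen ⟨ψ.realToRCLike 𝕜, by
    simpa [hψ_restrict, integralFunctional_apply, integral_ofReal] using hψ_pos.ne'⟩
  refine ⟨f, hfD, ‖f.restrict Uᶜ‖, integralFunctional_apply μ f ▸ hf, fun x hx => ?_⟩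
  exact (f.restrict Uᶜ).norm_coe_le_norm ⟨x, hx⟩

end Integration

section Characters

variable {A 𝕜 : Type*} [AddGroup A] [RCLike 𝕜]

theorem integral_eq_zero_of_map_add_eq_mul [MeasurableSpace A] [MeasurableAdd A] (μ : Measure A)
    [μ.IsAddLeftInvariant] {χ : A → 𝕜} (hχ : ∀ x y, χ (x + y) = χ x * χ y) {g : A}
    (hg : χ g ≠ 1) : ∫ x, χ x ∂μ = 0 := by
  have h : χ g * ∫ x, χ x ∂μ = ∫ x, χ x ∂μ := by
    simp only [← integral_const_mul, ← hχ, integral_add_left_eq_self χ g]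
  exact (mul_left_eq_self₀.mp h).resolve_left hg

variable [TopologicalSpace A] [IsTopologicalAddGroup A] [CompactSpace A]

theorem isProbabilityMeasure_addHaarMeasure_top [MeasurableSpace A] [BorelSpace A] :
    IsProbabilityMeasure (Measure.addHaarMeasure (⊤ : TopologicalSpace.PositiveCompacts A)) :=
  ⟨Measure.addHaarMeasure_self⟩

theorem exists_isProbabilityMeasure_null_of_coset_disjoint [MeasurableSpace A] [BorelSpace A]
    (H : AddSubgroup A) (z : A) {U : Set A} (hU : IsOpen U) (hHU : ∀ h ∈ H, z + h ∉ U) :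
    ∃ μ : Measure A, IsProbabilityMeasure μ ∧ μ U = 0 ∧
      ∀ χ : C(A, 𝕜), (∀ x y, χ (x + y) = χ x * χ y) → (∃ h ∈ H, χ h ≠ 1) → ∫ x, χ x ∂μ = 0 := by
  let K := H.topologicalClosure
  have : CompactSpace K :=
    isCompact_iff_compactSpace.mp H.isClosed_topologicalClosure.isCompact
  let κ : Measure K := Measure.addHaarMeasure ⊤
  have : IsProbabilityMeasure κ := isProbabilityMeasure_addHaarMeasure_top
  have hcont : Continuous fun k : K => z + k := by fun_prop
  have hKU : (fun k : K => z + k) ⁻¹' U = ∅ := by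
    refine Set.eq_empty_of_forall_notMem fun k => ?_
    exact closure_minimal (t := (z + ·) ⁻¹' Uᶜ) hHU (hU.isClosed_compl.preimage (by fun_prop)) k.2
  refine ⟨κ.map fun k : K => z + k, Measure.isProbabilityMeasure_map hcont.aemeasurable, ?_, ?_⟩
  · rw [Measure.map_apply hcont.measurable hU.measurableSet, hKU, measure_empty]
  · rintro χ hχ ⟨h, hh, hne⟩
    rw [integral_map hcont.aemeasurable χ.continuous.aestronglyMeasurable]
    simp only [hχ z, integral_const_mul]
    rw [integral_eq_zero_of_map_add_eq_mul κ (χ := fun k : K => χ k) (fun x y => hχ x y)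
      (g := ⟨h, H.le_topologicalClosure hh⟩) hne, mul_zero]

theorem exists_finset_forall_eq_one_of_coset_disjoint {X : Set C(A, 𝕜)}
    (hX : ∀ χ ∈ X, ∀ x y, χ (x + y) = χ x * χ y)
    (hdense : Dense (Submodule.span 𝕜 X : Set C(A, 𝕜))) {U : Set A} (hU : IsOpen U)
    (hne : U.Nonempty) :
    ∃ F : Finset C(A, 𝕜), ↑F ⊆ X ∧ 1 ∉ F ∧
      ∀ (H : AddSubgroup A) (z : A), (∀ h ∈ H, z + h ∉ U) → ∃ χ ∈ F, ∀ h ∈ H, χ h = 1 := by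
  classical
  borelize A
  let ν : Measure A := Measure.addHaarMeasure ⊤
  have : IsProbabilityMeasure ν := isProbabilityMeasure_addHaarMeasure_top
  obtain ⟨P, hP, δ, hδ, hPU⟩ := exists_mem_norm_le_lt_norm_integral hdense ν hU hne
  obtain ⟨T, hTX, hPT⟩ := Submodule.mem_span_finite_of_mem_span hP
  refine ⟨T.erase 1, fun χ hχ => hTX (Finset.mem_of_mem_erase hχ), Finset.notMem_erase 1 T,
    fun H z hH => ?_⟩
  by_contra! hcon
  obtain ⟨μ, hμ, hμU, hμχ⟩ := exists_isProbabilityMeasure_null_of_coset_disjoint (𝕜 := 𝕜) H z hU hH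
  have hμν : ∀ χ ∈ T, ∫ x, χ x ∂μ = ∫ x, χ x ∂ν := by
    intro χ hχ
    obtain rfl | hχ1 := eq_or_ne χ 1
    · simp
    obtain ⟨h, hh, hne⟩ := hcon χ (Finset.mem_erase.mpr ⟨hχ1, hχ⟩)
    rw [hμχ χ (hX χ (hTX hχ)) ⟨h, hh, hne⟩,
      integral_eq_zero_of_map_add_eq_mul ν (hX χ (hTX hχ)) hne]
  have hPμ : ∀ᵐ x ∂μ, ‖P x‖ ≤ δ :=
    (measure_eq_zero_iff_ae_notMem.mp hμU).mono hPU
  have hle : ‖∫ x, P x ∂μ‖ ≤ δ := by simpa using norm_integral_le_of_norm_le_const hPμ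
  rw [integral_eq_of_mem_span hμν hPT] at hle
  exact hle.not_gt hδ

end Characters

section Torus

variable {d : Type*} [Fintype d]

theorem mFourier_apply_add (n : d → ℤ) (x y : UnitAddTorus d) :
    mFourier n (x + y) = mFourier n x * mFourier n y := by
  simp [mFourier, smul_add, fourier_apply, AddCircle.toCircle_add, Finset.prod_mul_distrib]

theorem mFourier_apply_eq_one_iff {n : d → ℤ} {x : UnitAddTorus d} :
    mFourier n x = 1 ↔ ∑ i, n i • x i = 0 := by
  have h : mFourier n x = (AddCircle.toCircle (∑ i, n i • x i) : ℂ) := by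
    have hsum : AddCircle.toCircle (∑ i, n i • x i) = ∏ i, AddCircle.toCircle (n i • x i) :=
      map_sum AddCircle.toCircle_addChar.toAddMonoidHom (fun i => n i • x i) Finset.univ
    simp only [mFourier, ContinuousMap.coe_mk, fourier_apply, hsum]
    exact (map_prod Circle.coeHom (fun i => AddCircle.toCircle (n i • x i)) Finset.univ).symm
  rw [h, Circle.coe_eq_one, ← AddCircle.toCircle_zero (T := (1 : ℝ))]
  exact (AddCircle.injective_toCircle one_ne_zero).eq_iff

theorem exists_finset_forall_sum_zsmul_eq_zero_of_coset_disjoint {U : Set (UnitAddTorus d)}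
    (hU : IsOpen U) (hne : U.Nonempty) :
    ∃ F : Finset (d → ℤ), 0 ∉ F ∧ ∀ (H : AddSubgroup (UnitAddTorus d)) (z : UnitAddTorus d),
      (∀ h ∈ H, z + h ∉ U) → ∃ n ∈ F, ∀ h ∈ H, ∑ i, n i • h i = 0 := by
  classical
  obtain ⟨F, hFX, hF1, hF⟩ := exists_finset_forall_eq_one_of_coset_disjoint
    (X := Set.range (mFourier (d := d))) (Set.forall_mem_range.mpr mFourier_apply_add)
    (Submodule.dense_iff_topologicalClosure_eq_top.mpr span_mFourier_closure_eq_top) hU hne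
  rw [← Set.image_univ, Finset.subset_set_image_iff] at hFX
  obtain ⟨F, -, rfl⟩ := hFX
  refine ⟨F, fun h0 => hF1 (mFourier_zero (d := d) ▸ Finset.mem_image_of_mem _ h0),
    fun H z hH => ?_⟩
  simpa only [Finset.exists_mem_image, mFourier_apply_eq_one_iff] using hF H z hH

-- With `c = (p, q, k)`, this says `a x + b y = k (q x - p y)`.
theorem exists_isCoprime_eq_mul_eq_neg_mul {a b : ℤ} (h : a ≠ 0 ∨ b ≠ 0) :
    ∃ c : ℤ × ℤ × ℕ, (IsCoprime c.1 c.2.1 ∧ 1 ≤ c.2.2) ∧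
      a = c.2.2 * c.2.1 ∧ b = -(c.2.2 * c.1) := by
  obtain ⟨q, p, hqp, ha, hb⟩ := Int.exists_gcd_one (Int.gcd_pos_iff.mpr h)
  refine ⟨(-p, q, Int.gcd a b), ⟨?_, Int.gcd_pos_iff.mpr h⟩, ?_, ?_⟩
  · exact (Int.isCoprime_iff_gcd_eq_one.mpr hqp).symm.neg_left
  · rw [mul_comm, ← ha]
  · rw [mul_neg, neg_neg, mul_comm, ← hb]

theorem exists_finset_isCoprime_of_coset_disjoint
    {U : Set (AddCircle (1 : ℝ) × AddCircle (1 : ℝ))} (hU : IsOpen U) (hne : U.Nonempty) :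
    ∃ S : Finset (ℤ × ℤ × ℕ), (∀ c ∈ S, IsCoprime c.1 c.2.1 ∧ 1 ≤ c.2.2) ∧
      ∀ (H : AddSubgroup (AddCircle (1 : ℝ) × AddCircle (1 : ℝ))) (z), (∀ h ∈ H, z + h ∉ U) →
        ∃ c ∈ S, ∀ h ∈ H,
          (c.2.2 : ℤ) • (c.2.1 • h.1 - c.1 • h.2) = (0 : AddCircle (1 : ℝ)) := by
  classical
  let e : (AddCircle (1 : ℝ) × AddCircle (1 : ℝ)) ≃L[ℤ] UnitAddTorus (Fin 2) :=
    (ContinuousLinearEquiv.finTwoArrow ℤ (AddCircle (1 : ℝ))).symm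
  obtain ⟨F, hF0, hF⟩ := exists_finset_forall_sum_zsmul_eq_zero_of_coset_disjoint
    (hU.preimage e.symm.continuous) (hne.preimage e.symm.surjective)
  have hF_ne : ∀ n ∈ F, n 0 ≠ 0 ∨ n 1 ≠ 0 := by
    intro n hn
    by_contra! h
    exact hF0 ((funext (Fin.forall_fin_two.mpr h) : n = 0) ▸ hn)
  choose! c hc ha hb using fun n hn => exists_isCoprime_eq_mul_eq_neg_mul (hF_ne n hn)
  refine ⟨F.image c, Finset.forall_mem_image.mpr hc, fun H z hH => ?_⟩
  obtain ⟨n, hn, hnH⟩ := hF (H.map (e : _ →+ UnitAddTorus (Fin 2))) (e z) (by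
    rintro _ ⟨h, hh, rfl⟩
    simpa [← map_add] using hH h hh)
  refine ⟨c n, Finset.mem_image_of_mem c hn, fun h hh => ?_⟩
  calc (c n).2.2 • ((c n).2.1 • h.1 - (c n).1 • h.2) = n 0 • h.1 + n 1 • h.2 := by
        rw [ha n hn, hb n hn]; module
    _ = ∑ i, n i • e h i := by rw [Fin.sum_univ_two]; rfl
    _ = 0 := hnH (e h) ⟨h, hh, rfl⟩

theorem continuous_torusDist_left (y : AddCircle (1 : ℝ) × AddCircle (1 : ℝ)) :
    Continuous fun x => torusDist x y := by
  unfold torusDist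
  fun_prop

theorem torusDist_eq_torusDist_sub_zero (x y : AddCircle (1 : ℝ) × AddCircle (1 : ℝ)) :
    torusDist x y = torusDist (x - y) 0 := by
  simp [torusDist, dist_eq_norm]

end Torus

/-- for every `ε > 0` there are finitely many proper closed 1-dimensional
subgroups of `ℝ²/ℤ²` — kernels of the characters `(x,y) ↦ k(qx − py)` with `(p,q)` a
primitive integer vector and `k ≥ 1` — such that every subgroup `H` of `ℝ²/ℤ²` which is
not `ε`-dense (for the Euclidean metric) is contained in one of them. -/
theorem non_dense_subgroups_of_torus_in_finitely_many_circles
    (ε : ℝ) (hε : 0 < ε) :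
    ∃ S : Finset (ℤ × ℤ × ℕ),
      (∀ c ∈ S, IsCoprime c.1 c.2.1 ∧ 1 ≤ c.2.2) ∧
      ∀ H : AddSubgroup (AddCircle (1 : ℝ) × AddCircle (1 : ℝ)),
        ¬ (∀ z, ∃ h ∈ (H : Set (AddCircle (1 : ℝ) × AddCircle (1 : ℝ))), torusDist z h ≤ ε) →
        ∃ c ∈ S, ∀ h ∈ H,
          (c.2.2 : ℤ) • (c.2.1 • h.1 - c.1 • h.2) = (0 : AddCircle (1 : ℝ)) := by
  obtain ⟨S, hS, hS_kills⟩ := exists_finset_isCoprime_of_coset_disjoint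
    (U := {x | torusDist x 0 < ε}) (isOpen_lt (continuous_torusDist_left 0) continuous_const)
    ⟨0, by simpa [torusDist] using hε⟩
  refine ⟨S, hS, fun H hH => ?_⟩
  push Not at hH
  obtain ⟨z, hz⟩ := hH
  refine hS_kills H z fun h hh hlt => (hz (-h) (neg_mem hh)).not_gt ?_
  rwa [torusDist_eq_torusDist_sub_zero, sub_neg_eq_add]
end

section
/- Let s₂ be an irrational real number, let a, b, c, d be integers with ad − bc ≠ 0, and let s₁ ∈ ℝ be such that 1, s₁, s₂ are linearly independent over ℚ. Then the map (x₂, x₃, x₄) ↦ (x₂ + s₂, x₃ + a s₁ + b x₂, x₄ + c s₁ + d x₂) on ℝ³/ℤ³ is uniquely ergodic: the Haar measure is its unique invariant Borel probability measure. -/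
open MeasureTheory

/-!
Write `e(u) = e^{2πiu}`. If `μ` is invariant under `x ↦ A x + t`, its Fourier coefficients satisfy
`∫ e(χ) dμ = e(χ t) ∫ e(χ ∘ A) dμ`, so they have constant modulus along the orbit of `χ` under the
dual map `D : χ ↦ χ ∘ A`. Suppose `(D - 1)^(k+1) χ = 0`. If `D χ = χ`, then `e(χ t) ≠ 1` forces the
coefficient at `χ` to vanish. Otherwise the characters `D^i χ` are distinct, because the dual of a
connected group is torsion-free, and their differences are killed by `(D - 1)^k`; by induction the
functions `e(D^i χ)` are orthonormal in `L²(μ)`, and Bessel's inequality makes their common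
coefficient `0`. Hence `μ` has the Fourier coefficients of Haar measure.

On the torus, `A` adds `(b x₂, d x₂)` to the last two coordinates. The character
`k x₂ + l x₃ + m x₄` is fixed by `D` iff `l b + m d = 0`, and linear independence of `1, s₁, s₂`
allows it to kill the translation vector only if `k = 0` and `l a + m c = 0`; as `a d - b c ≠ 0`,
it is then trivial.
-/

open scoped ComplexConjugate InnerProductSpace

/-- The continuous function `x ↦ e^{2πi χ(x)}` attached to a character `χ` of `G`, where characters
are written additively, as homomorphisms to `ℝ/ℤ`. -/
noncomputable def expCharacter {G : Type*} [AddMonoid G] [TopologicalSpace G]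
    (χ : G →ₜ+ UnitAddCircle) : C(G, ℂ) :=
  (fourier 1).comp χ.toContinuousMap

section Characters

variable {G : Type*} [AddMonoid G] [TopologicalSpace G]

theorem expCharacter_apply (χ : G →ₜ+ UnitAddCircle) (x : G) :
    expCharacter χ x = AddCircle.toCircle (χ x) :=
  fourier_one

theorem expCharacter_zero : expCharacter (0 : G →ₜ+ UnitAddCircle) = 1 :=
  ContinuousMap.ext fun _ => fourier_eval_zero 1

theorem norm_expCharacter_apply (χ : G →ₜ+ UnitAddCircle) (x : G) : ‖expCharacter χ x‖ = 1 := by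
  rw [expCharacter_apply, Circle.norm_coe]

theorem expCharacter_apply_add (χ : G →ₜ+ UnitAddCircle) (x y : G) :
    expCharacter χ (x + y) = expCharacter χ x * expCharacter χ y := by
  simp only [expCharacter_apply, map_add, AddCircle.toCircle_add, Circle.coe_mul]

theorem expCharacter_add (χ ψ : G →ₜ+ UnitAddCircle) :
    expCharacter (χ + ψ) = expCharacter χ * expCharacter ψ := by
  ext x
  simp only [expCharacter_apply, ContinuousAddMonoidHom.add_apply, AddCircle.toCircle_add,
    Circle.coe_mul, ContinuousMap.mul_apply]

theorem expCharacter_neg (χ : G →ₜ+ UnitAddCircle) :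
    expCharacter (-χ) = star (expCharacter χ) := by
  ext x
  calc expCharacter (-χ) x = fourier 1 (-χ x) := rfl
    _ = conj (expCharacter χ x) := by
      rw [fourier_one, AddCircle.toCircle_neg, Circle.coe_inv_eq_conj, expCharacter_apply]

theorem expCharacter_apply_eq_one_iff {χ : G →ₜ+ UnitAddCircle} {x : G} :
    expCharacter χ x = 1 ↔ χ x = 0 := by
  rw [expCharacter_apply, ← Circle.coe_one, Circle.coe_inj, ← AddCircle.toCircle_zero (T := 1),
    (AddCircle.injective_toCircle one_ne_zero).eq_iff]

theorem integral_expCharacter_eq_zero_of_isAddLeftInvariant {G : Type*} [AddGroup G]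
    [TopologicalSpace G] [MeasurableSpace G] [MeasurableAdd G] (ν : Measure G)
    [ν.IsAddLeftInvariant] {χ : G →ₜ+ UnitAddCircle} (hχ : χ ≠ 0) :
    ∫ x, expCharacter χ x ∂ν = 0 := by
  obtain ⟨g, hg⟩ : ∃ g, χ g ≠ 0 := by
    by_contra! h
    exact hχ (ContinuousAddMonoidHom.ext h)
  have htranslate : ∫ x, expCharacter χ x ∂ν = expCharacter χ g * ∫ x, expCharacter χ x ∂ν := by
    rw [← integral_const_mul, ← integral_add_left_eq_self _ g]
    simp only [expCharacter_apply_add]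
  by_contra hne
  exact hg (expCharacter_apply_eq_one_iff.1 ((right_eq_mul₀ hne).1 htranslate))

theorem toSubmodule_adjoin_range_expCharacter :
    Subalgebra.toSubmodule (StarAlgebra.adjoin ℂ (Set.range (expCharacter (G := G)))).toSubalgebra =
      Submodule.span ℂ (Set.range expCharacter) := by
  have hstar : star (Set.range (expCharacter (G := G))) ⊆ Set.range expCharacter := by
    rintro f ⟨χ, hχ⟩
    exact ⟨-χ, by rw [expCharacter_neg, hχ, star_star]⟩
  let charactersMonoid : Submonoid C(G, ℂ) :=
    { carrier := Set.range expCharacter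
      one_mem' := ⟨0, expCharacter_zero⟩
      mul_mem' := by
        rintro _ _ ⟨χ, rfl⟩ ⟨ψ, rfl⟩
        exact ⟨χ + ψ, expCharacter_add χ ψ⟩ }
  rw [StarAlgebra.adjoin_toSubalgebra, Set.union_eq_left.2 hstar, Algebra.adjoin_eq_span]
  exact congrArg (fun S : Submonoid C(G, ℂ) => Submodule.span ℂ (S : Set C(G, ℂ)))
    charactersMonoid.closure_eq

end Characters

section FourierUniqueness

variable {G : Type*} [AddCommGroup G] [TopologicalSpace G] [CompactSpace G]

theorem dense_span_range_expCharacter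
    (hsep : ∀ x : G, x ≠ 0 → ∃ χ : G →ₜ+ UnitAddCircle, χ x ≠ 0) :
    Dense (Submodule.span ℂ (Set.range (expCharacter (G := G))) : Set C(G, ℂ)) := by
  rw [← toSubmodule_adjoin_range_expCharacter]
  refine dense_iff_closure_eq.2 <| SetLike.ext'_iff.1 <|
    ContinuousMap.starSubalgebra_topologicalClosure_eq_top_of_separatesPoints
      (StarAlgebra.adjoin ℂ (Set.range expCharacter)) fun x y hxy => ?_
  obtain ⟨χ, hχ⟩ := hsep (x - y) (sub_ne_zero.2 hxy)
  refine ⟨_, ⟨_, StarAlgebra.subset_adjoin ℂ _ ⟨χ, rfl⟩, rfl⟩, fun h => hχ ?_⟩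
  rw [map_sub, sub_eq_zero]
  simpa only [expCharacter_apply, Circle.coe_inj,
    (AddCircle.injective_toCircle one_ne_zero).eq_iff] using h

/-- Integration against a finite measure on a compact space, as a continuous linear functional: two
such functionals agree as soon as they agree on a set with dense span. -/
noncomputable def integralContinuousMapCLM {X : Type*} [TopologicalSpace X] [CompactSpace X]
    [MeasurableSpace X] [BorelSpace X] (μ : Measure X) [IsFiniteMeasure μ] : C(X, ℂ) →L[ℂ] ℂ :=
  L1.integralCLM' ℂ ∘L ContinuousMap.toLp 1 μ ℂ

theorem integralContinuousMapCLM_apply {X : Type*} [TopologicalSpace X] [CompactSpace X]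
    [MeasurableSpace X] [BorelSpace X] (μ : Measure X) [IsFiniteMeasure μ] (f : C(X, ℂ)) :
    integralContinuousMapCLM μ f = ∫ x, f x ∂μ := by
  rw [← integral_congr_ae (ContinuousMap.coeFn_toLp μ f (p := 1) (𝕜 := ℂ)),
    ← L1.integral_eq_integral, L1.integral_eq' ℂ]
  rfl

theorem ext_of_integral_expCharacter_eq [T2Space G] [MeasurableSpace G] [BorelSpace G]
    (hsep : ∀ x : G, x ≠ 0 → ∃ χ : G →ₜ+ UnitAddCircle, χ x ≠ 0)
    {μ ν : Measure G} [IsFiniteMeasure μ] [IsFiniteMeasure ν] [μ.Regular] [ν.Regular]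
    (h : ∀ χ : G →ₜ+ UnitAddCircle, ∫ x, expCharacter χ x ∂μ = ∫ x, expCharacter χ x ∂ν) :
    μ = ν := by
  have hCLM : integralContinuousMapCLM μ = integralContinuousMapCLM ν := by
    refine ContinuousLinearMap.ext_on (dense_span_range_expCharacter hsep) ?_
    rintro _ ⟨χ, rfl⟩
    simpa only [integralContinuousMapCLM_apply] using h χ
  refine Measure.ext_of_integral_eq_on_compactlySupported fun f => ?_
  have hf := DFunLike.congr_fun hCLM ((Complex.ofRealCLM : C(ℝ, ℂ)).comp (f : C(G, ℝ)))
  rw [integralContinuousMapCLM_apply, integralContinuousMapCLM_apply] at hf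
  refine Complex.ofReal_injective ?_
  rw [← integral_complex_ofReal, ← integral_complex_ofReal]
  exact hf

end FourierUniqueness

section Bessel

theorem eq_zero_of_orthonormal_of_norm_inner_eq {𝕜 E ι : Type*} [RCLike 𝕜]
    [SeminormedAddCommGroup E] [InnerProductSpace 𝕜 E] [Infinite ι] {v : ι → E}
    (hv : Orthonormal 𝕜 v) {w : E} {r : ℝ} (hr : ∀ i, ‖inner 𝕜 (v i) w‖ = r) : r = 0 := by
  have hsum := hv.inner_products_summable w
  simp only [hr] at hsum
  exact pow_eq_zero_iff two_ne_zero |>.1 ((summable_const_iff _).1 hsum)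

variable {G : Type*} [AddCommGroup G] [TopologicalSpace G] [CompactSpace G] [MeasurableSpace G]
  [BorelSpace G] {μ : Measure G} [IsProbabilityMeasure μ]

theorem inner_toLp_expCharacter (χ ψ : G →ₜ+ UnitAddCircle) :
    ⟪ContinuousMap.toLp 2 μ ℂ (expCharacter χ), ContinuousMap.toLp 2 μ ℂ (expCharacter ψ)⟫_ℂ =
      ∫ x, expCharacter (ψ - χ) x ∂μ := by
  rw [ContinuousMap.inner_toLp, sub_eq_add_neg, expCharacter_add, expCharacter_neg]
  rfl

theorem orthonormal_toLp_expCharacter {ι : Type*} {χ : ι → G →ₜ+ UnitAddCircle}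
    (horth : Pairwise fun i j => ∫ x, expCharacter (χ j - χ i) x ∂μ = 0) :
    Orthonormal ℂ fun i => ContinuousMap.toLp 2 μ ℂ (expCharacter (χ i)) := by
  classical
  refine orthonormal_iff_ite.2 fun i j => ?_
  rw [inner_toLp_expCharacter]
  split_ifs with hij
  · simp [hij, expCharacter_zero]
  · exact horth hij

theorem integral_expCharacter_eq_zero_of_norm_eq {ι : Type*} [Infinite ι]
    {χ : ι → G →ₜ+ UnitAddCircle}
    (horth : Pairwise fun i j => ∫ x, expCharacter (χ j - χ i) x ∂μ = 0)
    {ψ : G →ₜ+ UnitAddCircle}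
    (hnorm : ∀ i, ‖∫ x, expCharacter (χ i) x ∂μ‖ = ‖∫ x, expCharacter ψ x ∂μ‖) :
    ∫ x, expCharacter ψ x ∂μ = 0 := by
  refine norm_eq_zero.1 <| eq_zero_of_orthonormal_of_norm_inner_eq
    (orthonormal_toLp_expCharacter horth)
    (w := ContinuousMap.toLp 2 μ ℂ (expCharacter 0)) fun i => ?_
  rw [norm_inner_symm, inner_toLp_expCharacter, sub_zero, hnorm]

end Bessel

section Unipotent

variable {M : Type*} [AddCommGroup M] {D : AddMonoid.End M}

theorem commute_pow_sub_one_pow (D : AddMonoid.End M) (n k : ℕ) : Commute (D ^ n) ((D - 1) ^ k) :=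
  ((Commute.refl D).sub_right (Commute.one_right D)).pow_pow n k

theorem pow_apply_eq_add_nsmul {x : M} (hx : D ((D - 1) x) = (D - 1) x) (n : ℕ) :
    (D ^ n) x = x + n • (D - 1) x := by
  induction n with
  | zero => simp
  | succ n ih =>
    have hD : D x = x + (D - 1) x := (add_sub_cancel x (D x)).symm
    rw [pow_succ', AddMonoid.End.coe_mul, Function.comp_apply, ih, map_add, map_nsmul, hx, hD,
      succ_nsmul', add_assoc]

theorem eq_of_pow_apply_eq [IsAddTorsionFree M] {k : ℕ} {x : M} (hx : ((D - 1) ^ k) x = 0)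
    {i j : ℕ} (hij : i ≠ j) (h : (D ^ i) x = (D ^ j) x) : D x = x := by
  induction k generalizing x with
  | zero =>
    have hx : x = 0 := hx
    rw [hx, map_zero]
  | succ k ih =>
    have hcomm (n : ℕ) : (D ^ n) ((D - 1) x) = (D - 1) ((D ^ n) x) := by
      have := (commute_pow_sub_one_pow D n 1).eq
      rw [pow_one] at this
      exact DFunLike.congr_fun this x
    have hfix : D ((D - 1) x) = (D - 1) x :=
      ih (by rwa [pow_succ] at hx) (by rw [hcomm, hcomm, h])
    rw [pow_apply_eq_add_nsmul hfix, pow_apply_eq_add_nsmul hfix, add_right_inj] at h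
    by_contra hne
    have hnot : ¬IsOfFinAddOrder ((D - 1) x) :=
      not_isOfFinAddOrder_of_isAddTorsionFree (sub_ne_zero.2 hne)
    exact hij (injective_nsmul_iff_not_isOfFinAddOrder.2 hnot h)

theorem sub_one_pow_apply_pow_apply {k : ℕ} {x : M} (hx : ((D - 1) ^ (k + 1)) x = 0) (n : ℕ) :
    ((D - 1) ^ k) ((D ^ n) x) = ((D - 1) ^ k) x := by
  induction n with
  | zero => rfl
  | succ n ih =>
    rw [← ih, ← sub_eq_zero, ← map_sub]
    calc ((D - 1) ^ k) ((D ^ (n + 1)) x - (D ^ n) x)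
        = ((D - 1) ^ k * (D ^ n * (D - 1))) x := by
          rw [pow_succ, mul_sub, mul_one]; rfl
      _ = (D ^ n) (((D - 1) ^ (k + 1)) x) := by
          rw [← mul_assoc, ← (commute_pow_sub_one_pow D n k).eq, mul_assoc, ← pow_succ]; rfl
      _ = 0 := by rw [hx, map_zero]

end Unipotent

section DualGroup

theorem isAddTorsionFree_continuousAddMonoidHom {G : Type*} [AddGroup G] [TopologicalSpace G]
    [ConnectedSpace G] : IsAddTorsionFree (G →ₜ+ UnitAddCircle) := by
  refine isAddTorsionFree_iff_not_isOfFinAddOrder.2 fun χ hχ hfin => hχ ?_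
  obtain ⟨n, hn, hnχ⟩ := isOfFinAddOrder_iff_nsmul_eq_zero.1 hfin
  have hfinite : (Set.range χ).Finite := by
    refine (AddCircle.finite_torsion (1 : ℝ) hn).subset ?_
    rintro _ ⟨x, rfl⟩
    rw [Set.mem_ofPred_eq, ← ContinuousAddMonoidHom.nsmul_apply, hnχ]
    rfl
  have hsub : (Set.range χ).Subsingleton := by
    by_contra hnt
    exact (isPreconnected_range (map_continuous χ)).infinite_of_nontrivial
      (Set.not_subsingleton_iff.1 hnt) hfinite
  ext x
  rw [hsub ⟨x, rfl⟩ ⟨0, rfl⟩, map_zero]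
  rfl

/-- The endomorphism `χ ↦ χ ∘ A` of the dual group. It governs how the Fourier coefficients of a
measure invariant under an affine map with linear part `A` are permuted. -/
def dualEnd {G : Type*} [AddMonoid G] [TopologicalSpace G] (A : G →ₜ+ G) :
    AddMonoid.End (G →ₜ+ UnitAddCircle) where
  toFun χ := χ.comp A
  map_zero' := rfl
  map_add' _ _ := rfl

end DualGroup

section AffineMap

variable {G : Type*} [AddCommGroup G] [TopologicalSpace G] [MeasurableSpace G] [BorelSpace G]
  {A : G →ₜ+ G} {t : G} {μ : Measure G}

theorem integral_expCharacter_eq_mul_of_measurePreserving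
    (hμ : MeasurePreserving (fun x => A x + t) μ μ) (χ : G →ₜ+ UnitAddCircle) :
    ∫ x, expCharacter χ x ∂μ = expCharacter χ t * ∫ x, expCharacter (dualEnd A χ) x ∂μ := by
  have hmap := integral_map (μ := μ) hμ.aemeasurable
    (expCharacter χ).continuous.measurable.aestronglyMeasurable
  rw [hμ.map_eq] at hmap
  rw [hmap, ← integral_const_mul]
  simp only [expCharacter_apply_add, mul_comm]
  rfl

theorem norm_integral_expCharacter_dualEnd_pow
    (hμ : MeasurePreserving (fun x => A x + t) μ μ) (χ : G →ₜ+ UnitAddCircle) (n : ℕ) :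
    ‖∫ x, expCharacter ((dualEnd A ^ n) χ) x ∂μ‖ = ‖∫ x, expCharacter χ x ∂μ‖ := by
  induction n with
  | zero => rfl
  | succ n ih =>
    rw [← ih, integral_expCharacter_eq_mul_of_measurePreserving hμ ((dualEnd A ^ n) χ), norm_mul,
      norm_expCharacter_apply, one_mul, pow_succ']
    rfl

theorem integral_expCharacter_eq_zero_of_dualEnd_sub_one_pow [CompactSpace G] [ConnectedSpace G]
    [IsProbabilityMeasure μ] (hμ : MeasurePreserving (fun x => A x + t) μ μ)
    (hfix : ∀ χ : G →ₜ+ UnitAddCircle, dualEnd A χ = χ → χ t = 0 → χ = 0)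
    {k : ℕ} {χ : G →ₜ+ UnitAddCircle} (hk : ((dualEnd A - 1) ^ k) χ = 0) (hχ : χ ≠ 0) :
    ∫ x, expCharacter χ x ∂μ = 0 := by
  have := isAddTorsionFree_continuousAddMonoidHom (G := G)
  induction k generalizing χ with
  | zero => exact absurd hk hχ
  | succ k ih =>
    by_cases hinv : dualEnd A χ = χ
    · have hmul := integral_expCharacter_eq_mul_of_measurePreserving hμ χ
      rw [hinv] at hmul
      by_contra hne
      exact hχ (hfix χ hinv (expCharacter_apply_eq_one_iff.1 ((right_eq_mul₀ hne).1 hmul)))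
    · refine integral_expCharacter_eq_zero_of_norm_eq (χ := fun n : ℕ => (dualEnd A ^ n) χ)
        (fun i j hij => ih ?_ ?_) (norm_integral_expCharacter_dualEnd_pow hμ χ)
      · rw [map_sub, sub_one_pow_apply_pow_apply hk, sub_one_pow_apply_pow_apply hk, sub_self]
      · exact sub_ne_zero.2 fun h => hinv (eq_of_pow_apply_eq hk hij h.symm)

theorem uniquely_ergodic_skew_translation_T3_general [IsTopologicalAddGroup G] [CompactSpace G]
    [T2Space G] [ConnectedSpace G] (hsep : ∀ x : G, x ≠ 0 → ∃ χ : G →ₜ+ UnitAddCircle, χ x ≠ 0)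
    (hunip : ∀ χ : G →ₜ+ UnitAddCircle, ∃ k : ℕ, ((dualEnd A - 1) ^ k) χ = 0)
    (hfix : ∀ χ : G →ₜ+ UnitAddCircle, dualEnd A χ = χ → χ t = 0 → χ = 0)
    (ν : Measure G) [IsProbabilityMeasure ν] [ν.IsAddLeftInvariant] [ν.Regular]
    [IsProbabilityMeasure μ] [μ.Regular] (hμ : MeasurePreserving (fun x => A x + t) μ μ) :
    μ = ν := by
  refine ext_of_integral_expCharacter_eq hsep fun χ => ?_
  by_cases hχ : χ = 0
  · simp [hχ, expCharacter_zero]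
  · obtain ⟨k, hk⟩ := hunip χ
    rw [integral_expCharacter_eq_zero_of_isAddLeftInvariant ν hχ,
      integral_expCharacter_eq_zero_of_dualEnd_sub_one_pow hμ hfix hk hχ]

end AffineMap

section Shear

variable {H K : Type*} [AddCommGroup H] [AddCommGroup K] [TopologicalSpace H] [TopologicalSpace K]

/-- The unipotent endomorphism `(h, k) ↦ (h, k + φ h)` of `H × K`, the linear part of a skew
translation. -/
def shear [ContinuousAdd K] (φ : H →ₜ+ K) : H × K →ₜ+ H × K :=
  (ContinuousAddMonoidHom.fst H K).prod (.snd H K + φ.comp (.fst H K))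

theorem dualEnd_shear_sub_one_apply [ContinuousAdd K] (φ : H →ₜ+ K) (χ : H × K →ₜ+ UnitAddCircle)
    (p : H × K) : (dualEnd (shear φ) - 1) χ p = χ (0, φ p.1) := by
  calc (dualEnd (shear φ) - 1) χ p = χ (p.1, p.2 + φ p.1) - χ p := rfl
    _ = χ ((p.1, p.2 + φ p.1) - p) := (map_sub χ _ _).symm
    _ = χ (0, φ p.1) := congrArg χ (Prod.ext (sub_self _) (add_sub_cancel_left _ _))

theorem dualEnd_shear_sub_one_sq [ContinuousAdd K] (φ : H →ₜ+ K) :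
    (dualEnd (shear φ) - 1) ^ 2 = 0 := by
  ext χ p
  rw [pow_two, AddMonoid.End.coe_mul, Function.comp_apply, dualEnd_shear_sub_one_apply,
    dualEnd_shear_sub_one_apply]
  change χ (0, φ 0) = 0
  rw [map_zero]
  exact map_zero χ

theorem exists_character_prod_apply_ne_zero
    (hH : ∀ x : H, x ≠ 0 → ∃ χ : H →ₜ+ UnitAddCircle, χ x ≠ 0)
    (hK : ∀ y : K, y ≠ 0 → ∃ χ : K →ₜ+ UnitAddCircle, χ y ≠ 0) (p : H × K) (hp : p ≠ 0) :
    ∃ χ : H × K →ₜ+ UnitAddCircle, χ p ≠ 0 := by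
  by_cases h : p.1 = 0
  · obtain ⟨χ, hχ⟩ := hK p.2 fun h' => hp (Prod.ext h h')
    exact ⟨χ.comp (.snd H K), hχ⟩
  · obtain ⟨χ, hχ⟩ := hH p.1 h
    exact ⟨χ.comp (.fst H K), hχ⟩

theorem character_prod_apply (χ : H × K →ₜ+ UnitAddCircle) (p : H × K) :
    χ p = χ.comp (.inl H K) p.1 + χ.comp (.inr H K) p.2 := by
  change χ p = χ (p.1, 0) + χ (0, p.2)
  rw [← map_add, Prod.fst_add_snd]

end Shear

section Torus

/-- Multiplication by an integer, as a continuous endomorphism. These are the characters of the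
circle. -/
def zsmulHom (G : Type*) [AddCommGroup G] [TopologicalSpace G] [IsTopologicalAddGroup G] (n : ℤ) :
    G →ₜ+ G :=
  ⟨zsmulAddGroupHom n, continuous_zsmul n⟩

theorem fourierCoeff_expCharacter (χ : UnitAddCircle →ₜ+ UnitAddCircle) (n : ℤ) :
    fourierCoeff (expCharacter χ) n =
      ∫ x, expCharacter (χ - zsmulHom UnitAddCircle n) x ∂AddCircle.haarAddCircle := by
  refine integral_congr_ae (.of_forall fun y => ?_)
  calc fourier (-n) y • expCharacter χ y = conj (fourier 1 (n • y)) * fourier 1 (χ y) := by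
        simp [expCharacter_apply]
    _ = _ := by
        rw [sub_eq_add_neg, expCharacter_add, expCharacter_neg, mul_comm]; rfl

theorem exists_eq_zsmulHom (χ : UnitAddCircle →ₜ+ UnitAddCircle) :
    ∃ n : ℤ, χ = zsmulHom UnitAddCircle n := by
  by_contra! hχ
  have hcoeff : fourierCoeff (expCharacter χ) = 0 := by
    ext n
    rw [fourierCoeff_expCharacter]
    exact integral_expCharacter_eq_zero_of_isAddLeftInvariant _ (sub_ne_zero.2 (hχ n))
  have hseries := has_pointwise_sum_fourier_series_of_summable (f := expCharacter χ)
    (hcoeff ▸ summable_zero) 0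
  simp only [hcoeff, Pi.zero_apply, zero_smul] at hseries
  have hone : expCharacter χ 0 = 1 := expCharacter_apply_eq_one_iff.2 (map_zero χ)
  exact one_ne_zero (hone.symm.trans (hseries.unique hasSum_zero))

theorem exists_int_character_apply_eq
    (χ : UnitAddCircle × UnitAddCircle × UnitAddCircle →ₜ+ UnitAddCircle) :
    ∃ k l m : ℤ, ∀ x y z, χ (x, y, z) = k • x + (l • y + m • z) := by
  obtain ⟨k, hk⟩ := exists_eq_zsmulHom (χ.comp (.inl _ _))
  obtain ⟨l, hl⟩ := exists_eq_zsmulHom ((χ.comp (.inr _ _)).comp (.inl _ _))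
  obtain ⟨m, hm⟩ := exists_eq_zsmulHom ((χ.comp (.inr _ _)).comp (.inr _ _))
  refine ⟨k, l, m, fun x y z => ?_⟩
  rw [character_prod_apply, character_prod_apply (χ.comp (.inr _ _)), hk, hl, hm]
  rfl

theorem eq_zero_of_zsmul_coe_add_zsmul_coe_eq_zero {s₁ s₂ : ℝ}
    (hind : LinearIndependent ℚ ![(1 : ℝ), s₁, s₂]) {m n : ℤ}
    (h : m • (s₁ : UnitAddCircle) + n • (s₂ : UnitAddCircle) = 0) : m = 0 ∧ n = 0 := by
  rw [← AddCircle.coe_zsmul, ← AddCircle.coe_zsmul, ← AddCircle.coe_add,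
    AddCircle.coe_eq_zero_iff] at h
  obtain ⟨q, hq⟩ := h
  have hcoef := Fintype.linearIndependent_iff.1 hind ![(-q : ℚ), (m : ℚ), (n : ℚ)] (by
    simp only [Fin.sum_univ_three, Matrix.cons_val, Rat.smul_def]
    simp only [zsmul_eq_mul] at hq
    push_cast
    linear_combination -hq)
  exact ⟨Int.cast_eq_zero.1 (hcoef 1), Int.cast_eq_zero.1 (hcoef 2)⟩

theorem eq_zero_of_dualEnd_shear_eq_of_apply_eq_zero {s₁ s₂ : ℝ}
    (hind : LinearIndependent ℚ ![(1 : ℝ), s₁, s₂]) {a b c d : ℤ} (hdet : a * d - b * c ≠ 0)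
    {χ : UnitAddCircle × UnitAddCircle × UnitAddCircle →ₜ+ UnitAddCircle}
    (hfix : dualEnd (shear ((zsmulHom _ b).prod (zsmulHom _ d))) χ = χ)
    (hzero : χ (s₂, a • s₁, c • s₁) = 0) : χ = 0 := by
  obtain ⟨k, l, m, hχ⟩ := exists_int_character_apply_eq χ
  have hbd : l * b + m * d = 0 := by
    have hφ : χ (0, b • (s₂ : UnitAddCircle), d • (s₂ : UnitAddCircle)) = 0 := by
      have hsub : (dualEnd (shear ((zsmulHom _ b).prod (zsmulHom _ d))) - 1) χ = 0 :=
        sub_eq_zero.2 hfix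
      exact (dualEnd_shear_sub_one_apply _ χ (s₂, 0, 0)).symm.trans (DFunLike.congr_fun hsub _)
    refine (eq_zero_of_zsmul_coe_add_zsmul_coe_eq_zero hind (m := 0) ?_).2
    rw [← hφ, hχ]
    module
  have hac : l * a + m * c = 0 ∧ k = 0 := by
    refine eq_zero_of_zsmul_coe_add_zsmul_coe_eq_zero hind ?_
    rw [← hzero, hχ]
    module
  have hl : l = 0 := (mul_eq_zero.1 (by linear_combination d * hac.1 - c * hbd :
    l * (a * d - b * c) = 0)).resolve_right hdet
  have hm : m = 0 := (mul_eq_zero.1 (by linear_combination a * hbd - b * hac.1 :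
    m * (a * d - b * c) = 0)).resolve_right hdet
  ext ⟨x, y, z⟩
  simp [hχ, hl, hm, hac.2]

end Torus

section Volume

variable {G H : Type*} [MeasureSpace G] [MeasureSpace H]

instance isProbabilityMeasure_volume_unitAddCircle :
    IsProbabilityMeasure (volume : Measure UnitAddCircle) :=
  ⟨UnitAddCircle.measure_univ⟩

instance isProbabilityMeasure_volume_prod [IsProbabilityMeasure (volume : Measure G)]
    [IsProbabilityMeasure (volume : Measure H)] :
    IsProbabilityMeasure (volume : Measure (G × H)) :=
  Measure.prod.instIsProbabilityMeasure _ _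

instance isAddLeftInvariant_volume_prod [Add G] [Add H] [MeasurableAdd G] [MeasurableAdd H]
    [SFinite (volume : Measure G)] [SFinite (volume : Measure H)]
    [(volume : Measure G).IsAddLeftInvariant] [(volume : Measure H).IsAddLeftInvariant] :
    (volume : Measure (G × H)).IsAddLeftInvariant :=
  Measure.prod.instIsAddLeftInvariant

end Volume

/-- under the same hypotheses as Statement 5, the map
`(x₂,x₃,x₄) ↦ (x₂+s₂, x₃+as₁+bx₂, x₄+cs₁+dx₂)` on `ℝ³/ℤ³` is uniquely ergodic:
the Haar measure is its unique invariant Borel probability measure. -/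
theorem uniquely_ergodic_skew_translation_T3
    (s₁ s₂ : ℝ) (hs₂ : Irrational s₂)
    (hind : LinearIndependent ℚ ![(1 : ℝ), s₁, s₂])
    (a b c d : ℤ) (hdet : a * d - b * c ≠ 0)
    (μ : Measure (AddCircle (1 : ℝ) × AddCircle (1 : ℝ) × AddCircle (1 : ℝ)))
    [IsProbabilityMeasure μ]
    (hinv : MeasurePreserving
      (fun p : AddCircle (1 : ℝ) × AddCircle (1 : ℝ) × AddCircle (1 : ℝ) =>
        (p.1 + (s₂ : AddCircle (1 : ℝ)),
         p.2.1 + (((a : ℝ) * s₁ : ℝ) : AddCircle (1 : ℝ)) + b • p.1,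
         p.2.2 + (((c : ℝ) * s₁ : ℝ) : AddCircle (1 : ℝ)) + d • p.1))
      μ μ) :
    μ = volume := by
  let A := shear ((zsmulHom UnitAddCircle b).prod (zsmulHom UnitAddCircle d))
  let t : UnitAddCircle × UnitAddCircle × UnitAddCircle := (s₂, a • s₁, c • s₁)
  have haffine : MeasurePreserving (fun p => A p + t) μ μ := by
    convert hinv using 2 with p
    rw [← zsmul_eq_mul, ← zsmul_eq_mul, AddCircle.coe_zsmul, AddCircle.coe_zsmul,
      add_right_comm, add_right_comm p.2.2]
    rfl
  have hsep (x : UnitAddCircle) (hx : x ≠ 0) : ∃ χ : UnitAddCircle →ₜ+ UnitAddCircle, χ x ≠ 0 :=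
    ⟨.id _, hx⟩
  have := isAddLeftInvariant_volume_prod (G := UnitAddCircle) (H := UnitAddCircle × UnitAddCircle)
  have : (volume : Measure (UnitAddCircle × UnitAddCircle × UnitAddCircle)).Regular :=
    .of_sigmaCompactSpace_of_isLocallyFiniteMeasure _
  exact uniquely_ergodic_skew_translation_T3_general
    (exists_character_prod_apply_ne_zero hsep <| exists_character_prod_apply_ne_zero hsep hsep)
    (fun χ => ⟨2, by rw [dualEnd_shear_sub_one_sq]; rfl⟩)
    (fun χ => eq_zero_of_dualEnd_shear_eq_of_apply_eq_zero hind hdet) volume haffine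
end

section
/- Let g(x, y) = (x + s, y + x) on the torus (ℂ/Λ)², realized as an affine map on ℂ²/(Λ×Λ). If the orbit of every point under the translation x ↦ x + s is dense in ℂ/Λ (equivalently, s generates a dense subgroup), then g is uniquely ergodic: the unique g-invariant Borel probability measure on ℂ²/(Λ×Λ) is the Haar measure. -/
open MeasureTheory

/-! A finite measure on a torus is determined by the integrals of the characters, so it suffices to
show that `∫ χ dμ = 0` for every nontrivial character `χ` and every invariant probability measure
`μ`. A nontrivial character `φ` of the base satisfies `φ (x + s) = φ s * φ x` with `φ s ≠ 1` by
density, so invariance gives `∫ φ dμ = 0`. If `χ` restricts to a nontrivial character `ψ` of the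
fibre, then `T^n (x, y) = (x + n s, y + n x + (n choose 2) s)` shows that `(χ ∘ T^n) * conj χ` is a
constant multiple of `ψ^n` on the base. For `n ≠ 0` the character `ψ^n` is nontrivial, because the
dual of a connected group is torsion-free. So the functions `χ ∘ T^n` are orthonormal in `L²(μ)`,
while by invariance they all have the same inner product with `1`; Bessel's inequality forces this
inner product to vanish. -/

open scoped BoundedContinuousFunction ComplexConjugate

section InvariantIntegrals

variable {𝕜 : Type*} [RCLike 𝕜]

lemma inner_eq_zero_of_isometry_of_inner_pow_eq_zero {H : Type*} [SeminormedAddCommGroup H]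
    [InnerProductSpace 𝕜 H] (U : H →ₗᵢ[𝕜] H) {x e : H} (he : U e = e)
    (hx : ∀ n : ℕ, n ≠ 0 → inner 𝕜 x ((U ^ n) x) = 0) : inner 𝕜 x e = 0 := by
  by_cases hx0 : ‖x‖ = 0
  · exact norm_le_zero_iff.1 ((norm_inner_le_norm x e).trans_eq (by rw [hx0, zero_mul]))
  let u : H := (‖x‖⁻¹ : 𝕜) • x
  have horth_lt {m n : ℕ} (hmn : m < n) : inner 𝕜 ((U ^ m) u) ((U ^ n) u) = 0 := by
    rw [← Nat.add_sub_of_le hmn.le, pow_add, LinearIsometry.coe_mul, Function.comp_apply,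
      LinearIsometry.inner_map_map, map_smul, inner_smul_left, inner_smul_right,
      hx _ (Nat.sub_ne_zero_of_lt hmn), mul_zero, mul_zero]
  have horthonormal : Orthonormal 𝕜 fun n : ℕ => (U ^ n) u := by
    refine ⟨fun n => ?_, fun m n hmn => hmn.lt_or_gt.elim horth_lt fun hnm =>
      inner_eq_zero_symm.1 (horth_lt hnm)⟩
    rw [LinearIsometry.norm_map, norm_smul, norm_inv, RCLike.norm_ofReal, abs_norm,
      inv_mul_cancel₀ hx0]
  have hfixed (n : ℕ) : (U ^ n) e = e := by
    rw [LinearIsometry.coe_pow, Function.iterate_fixed he]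
  have hconst (n : ℕ) : inner 𝕜 ((U ^ n) u) e = inner 𝕜 u e := by
    conv_lhs => rw [← hfixed n, LinearIsometry.inner_map_map]
  have hsummable := horthonormal.inner_products_summable e
  simp only [hconst, summable_const_iff, sq_eq_zero_iff, norm_eq_zero] at hsummable
  simpa [u, inner_smul_left, hx0] using hsummable

variable {X : Type*} [MeasurableSpace X] {μ : Measure X} {T : X → X} {f : X → 𝕜}

lemma integral_eq_zero_of_comp_eq_mul (hT : MeasurePreserving T μ μ)
    (hf : AEStronglyMeasurable f μ) {c : 𝕜} (hc : c ≠ 1) (hfT : ∀ x, f (T x) = c * f x) :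
    ∫ x, f x ∂μ = 0 := by
  have hinv : ∫ x, f (T x) ∂μ = ∫ x, f x ∂μ := by
    rw [← integral_map hT.aemeasurable (hT.map_eq.symm ▸ hf), hT.map_eq]
  simp only [hfT, integral_const_mul] at hinv
  by_contra h
  exact hc ((mul_eq_right₀ h).1 hinv)

lemma integral_eq_zero_of_integral_iterate_mul_conj_eq_zero [IsFiniteMeasure μ]
    (hT : MeasurePreserving T μ μ) (hf : MemLp f 2 μ)
    (hcorr : ∀ n ≠ 0, ∫ x, f (T^[n] x) * conj (f x) ∂μ = 0) : ∫ x, f x ∂μ = 0 := by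
  let U := Lp.compMeasurePreservingₗᵢ (E := 𝕜) (p := 2) 𝕜 T hT
  have hone : MemLp (1 : X → 𝕜) 2 μ := memLp_const 1
  have hinner {g h : X → 𝕜} (hg : MemLp g 2 μ) (hh : MemLp h 2 μ) :
      inner 𝕜 (hg.toLp g) (hh.toLp h) = ∫ x, h x * conj (g x) ∂μ := by
    rw [L2.inner_def]
    refine integral_congr_ae ?_
    filter_upwards [hg.coeFn_toLp, hh.coeFn_toLp] with x hgx hhx
    rw [hgx, hhx, RCLike.inner_apply]
  have hU_pow (n : ℕ) :
      (U ^ n) (hf.toLp f) = (hf.comp_measurePreserving (hT.iterate n)).toLp (f ∘ T^[n]) := by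
    rw [LinearIsometry.coe_pow]
    exact (congrFun (Lp.compMeasurePreserving_iterate hT n) _).trans
      (Lp.toLp_compMeasurePreserving hf (hT.iterate n))
  have horth : inner 𝕜 (hf.toLp f) (hone.toLp 1) = 0 :=
    inner_eq_zero_of_isometry_of_inner_pow_eq_zero U (Lp.toLp_compMeasurePreserving hone hT)
      fun n hn => by rw [hU_pow, hinner]; exact hcorr n hn
  simpa [hinner, integral_conj] using horth

end InvariantIntegrals

section Determination

variable {E 𝕜 : Type*} [RCLike 𝕜] [TopologicalSpace E] [PolishSpace E]
  [MeasurableSpace E] [BorelSpace E] {μ ν : Measure E} [IsFiniteMeasure μ] [IsFiniteMeasure ν]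

lemma measure_ext_of_submonoid_integral_eq (M : Submonoid (E →ᵇ 𝕜)) (hstar : ∀ f ∈ M, star f ∈ M)
    (hsep : ∀ x y, x ≠ y → ∃ f ∈ M, f x ≠ f y) (h : ∀ f ∈ M, ∫ x, f x ∂μ = ∫ x, f x ∂ν) :
    μ = ν := by
  refine ext_of_forall_mem_subalgebra_integral_eq_of_polish
    (A := StarAlgebra.adjoin 𝕜 (M : Set (E →ᵇ 𝕜))) (fun x y hxy => ?_) fun f hf => ?_
  · obtain ⟨f, hfM, hf⟩ := hsep x y hxy
    exact ⟨f, ⟨f.toContinuousMap, ⟨f, StarAlgebra.subset_adjoin 𝕜 _ hfM, rfl⟩, rfl⟩, hf⟩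
  · have hspan : f ∈ Submodule.span 𝕜 (M : Set (E →ᵇ 𝕜)) := by
      have hstar_subset : star (M : Set (E →ᵇ 𝕜)) ⊆ M := fun g hg => star_star g ▸ hstar _ hg
      rwa [← StarSubalgebra.mem_toSubalgebra, ← Subalgebra.mem_toSubmodule,
        StarAlgebra.adjoin_eq_span, Set.union_eq_self_of_subset_right hstar_subset,
        Submonoid.closure_eq] at hf
    clear hf
    induction hspan using Submodule.span_induction with
    | mem f hf => exact h f hf
    | zero => simp only [BoundedContinuousFunction.coe_zero, Pi.zero_apply, integral_zero]
    | add f g _ _ hf hg =>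
      simp only [BoundedContinuousFunction.coe_add, Pi.add_apply,
        integral_add (f.integrable _) (g.integrable _), hf, hg]
    | smul c f _ hf =>
      simp only [BoundedContinuousFunction.coe_smul, smul_eq_mul, integral_const_mul, hf]

end Determination

section Characters

variable {G H : Type*} [AddCommGroup G] [TopologicalSpace G] [AddCommGroup H] [TopologicalSpace H]

variable (G) in
/-- The continuous unitary characters of `G` separate points. Every compact Hausdorff
group has this property, by the Peter–Weyl theorem. -/
def CharactersSeparatePoints : Prop :=
  ∀ x : G, x ≠ 0 → ∃ χ : AddChar G Circle, Continuous χ ∧ χ x ≠ 1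

namespace CharactersSeparatePoints

lemma exists_apply_ne (hG : CharactersSeparatePoints G) {x y : G} (hxy : x ≠ y) :
    ∃ χ : AddChar G Circle, Continuous χ ∧ χ x ≠ χ y := by
  obtain ⟨χ, hχ, hne⟩ := hG (x - y) (sub_ne_zero.2 hxy)
  exact ⟨χ, hχ, by rwa [AddChar.map_sub_eq_div, ne_eq, div_eq_one] at hne⟩

lemma t2Space (hG : CharactersSeparatePoints G) : T2Space G where
  t2 _ _ hxy := by
    obtain ⟨χ, hχ, hne⟩ := hG.exists_apply_ne hxy
    exact separated_by_continuous hχ hne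

lemma prod (hG : CharactersSeparatePoints G) (hH : CharactersSeparatePoints H) :
    CharactersSeparatePoints (G × H) := by
  intro p hp
  by_cases h₁ : p.1 = 0
  · obtain ⟨χ, hχ, hne⟩ := hH p.2 fun h₂ => hp (Prod.ext h₁ h₂)
    exact ⟨χ.compAddMonoidHom (.snd G H), hχ.comp continuous_snd, hne⟩
  · obtain ⟨χ, hχ, hne⟩ := hG p.1 h₁
    exact ⟨χ.compAddMonoidHom (.fst G H), hχ.comp continuous_fst, hne⟩

end CharactersSeparatePoints

variable (G) in
/-- The continuous unitary characters of `G`, as bounded continuous functions. -/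
def characterSubmonoid : Submonoid (G →ᵇ ℂ) where
  carrier := {f | ∃ χ : AddChar G Circle, Continuous χ ∧ ∀ x, f x = χ x}
  one_mem' := ⟨1, continuous_const, fun _ => rfl⟩
  mul_mem' := by
    rintro f g ⟨χ, hχ, hf⟩ ⟨ψ, hψ, hg⟩
    exact ⟨χ * ψ, hχ.mul hψ, fun x => congrArg₂ (· * ·) (hf x) (hg x)⟩

lemma star_mem_characterSubmonoid {f : G →ᵇ ℂ} (hf : f ∈ characterSubmonoid G) :
    star f ∈ characterSubmonoid G := by
  obtain ⟨χ, hχ, hf⟩ := hf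
  have hinv (x : G) : χ⁻¹ x = (χ x)⁻¹ := χ.inv_apply' x
  refine ⟨χ⁻¹, hχ.inv.congr fun x => (hinv x).symm, fun x => ?_⟩
  rw [BoundedContinuousFunction.star_apply, hf, hinv, Circle.coe_inv_eq_conj, RCLike.star_def]

lemma exists_mem_characterSubmonoid {χ : AddChar G Circle} (hχ : Continuous χ) :
    ∃ f ∈ characterSubmonoid G, ∀ x, f x = χ x :=
  ⟨.ofNormedAddCommGroup (fun x => (χ x : ℂ)) (by fun_prop) 1 fun x => (Circle.norm_coe (χ x)).le,
    ⟨χ, hχ, fun _ => rfl⟩, fun _ => rfl⟩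

lemma measure_ext_of_integral_addChar_eq [PolishSpace G] [MeasurableSpace G] [BorelSpace G]
    {μ ν : Measure G} [IsFiniteMeasure μ] [IsFiniteMeasure ν] (hG : CharactersSeparatePoints G)
    (h : ∀ χ : AddChar G Circle, Continuous χ → ∫ x, (χ x : ℂ) ∂μ = ∫ x, (χ x : ℂ) ∂ν) :
    μ = ν := by
  refine measure_ext_of_submonoid_integral_eq (characterSubmonoid G)
    (fun _ => star_mem_characterSubmonoid) (fun x y hxy => ?_) ?_
  · obtain ⟨χ, hχ, hne⟩ := hG.exists_apply_ne hxy
    obtain ⟨f, hfmem, hf⟩ := exists_mem_characterSubmonoid hχ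
    exact ⟨f, hfmem, by rwa [hf, hf, ne_eq, Circle.coe_inj]⟩
  · rintro f ⟨χ, hχ, hf⟩
    simpa only [hf] using h χ hχ

lemma addChar_eq_one_of_pow_eq_one [PreconnectedSpace G] {χ : AddChar G Circle}
    (hχ : Continuous χ) {n : ℕ} (hn : n ≠ 0) (h : χ ^ n = 1) : χ = 1 := by
  have hfinite : {z : ℂ | z ^ n = 1}.Finite :=
    (Polynomial.nthRootsFinset n (1 : ℂ)).finite_toSet.subset fun z hz =>
      (Polynomial.mem_nthRootsFinset hn.bot_lt 1).2 hz
  have hroot (x : G) : (χ x : ℂ) ^ n = 1 := by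
    rw [← Circle.coe_pow, ← AddChar.pow_apply, h, AddChar.one_apply, Circle.coe_one]
  ext x
  have hconst : (χ x : ℂ) = χ 0 := isPreconnected_univ.constant_of_mapsTo hfinite.isDiscrete
    (by fun_prop : Continuous fun x => (χ x : ℂ)).continuousOn (fun x _ => hroot x) trivial trivial
  rw [hconst, AddChar.map_zero_eq_one, AddChar.one_apply]

lemma addChar_apply_ne_one_of_dense_zmultiples {s : G}
    (hs : Dense (AddSubgroup.zmultiples s : Set G)) {χ : AddChar G Circle} (hχ : Continuous χ)
    (hne : χ ≠ 1) : χ s ≠ 1 := by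
  refine fun hχs => hne (DFunLike.coe_injective (hχ.ext_on hs continuous_const ?_))
  rintro _ ⟨n, rfl⟩
  simp only [AddChar.map_zsmul_eq_zpow, hχs, one_zpow, AddChar.one_apply]

lemma integral_addChar_comp_eq_zero {X : Type*} [MeasurableSpace X] {μ : Measure X} {T : X → X}
    (hT : MeasurePreserving T μ μ) [MeasurableSpace G] [OpensMeasurableSpace G] {s : G}
    (hs : Dense (AddSubgroup.zmultiples s : Set G)) {π : X → G} (hπ : AEMeasurable π μ)
    (hπT : Function.Semiconj π T (· + s)) {χ : AddChar G Circle} (hχ : Continuous χ)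
    (hne : χ ≠ 1) : ∫ x, (χ (π x) : ℂ) ∂μ = 0 := by
  have hχs : (χ s : ℂ) ≠ 1 :=
    Circle.coe_eq_one.not.2 (addChar_apply_ne_one_of_dense_zmultiples hs hχ hne)
  have hcont : Continuous fun x => (χ x : ℂ) := by fun_prop
  refine integral_eq_zero_of_comp_eq_mul hT
    (hcont.measurable.comp_aemeasurable hπ).aestronglyMeasurable hχs fun x => ?_
  rw [hπT x, AddChar.map_add_eq_mul, Circle.coe_mul, mul_comm]

end Characters

section SkewTranslation

variable {G : Type*}

/-- The skew translation `(x, y) ↦ (x + s, y + x)`. -/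
def skewTranslation [Add G] (s : G) (p : G × G) : G × G := (p.1 + s, p.2 + p.1)

lemma skewTranslation_iterate [AddCommMonoid G] (s : G) (n : ℕ) (p : G × G) :
    (skewTranslation s)^[n] p = (p.1 + n • s, p.2 + n • p.1 + n.choose 2 • s) := by
  induction n with
  | zero => simp
  | succ n ih =>
    have hchoose : (n + 1).choose 2 = n + n.choose 2 := by
      rw [Nat.choose_succ_succ' n 1, Nat.choose_one_right]
    rw [Function.iterate_succ_apply', ih, skewTranslation, hchoose]
    ext <;> simp only [add_nsmul, one_nsmul] <;> abel

variable [AddCommGroup G]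

lemma addChar_skewTranslation_iterate (χ : AddChar (G × G) Circle) (s : G) (n : ℕ) (p : G × G) :
    χ ((skewTranslation s)^[n] p) =
      (χ.compAddMonoidHom (.inr G G) ^ n) p.1 * χ (n • s, n.choose 2 • s) * χ p := by
  rw [AddChar.pow_apply, ← AddChar.map_nsmul_eq_pow, AddChar.compAddMonoidHom_apply,
    ← AddChar.map_add_eq_mul, ← AddChar.map_add_eq_mul, skewTranslation_iterate]
  congr 1
  ext <;> simp <;> abel

lemma addChar_eq_comp_fst_of_comp_inr_eq_one {χ : AddChar (G × G) Circle}
    (h : χ.compAddMonoidHom (.inr G G) = 1) (p : G × G) :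
    χ p = χ.compAddMonoidHom (.inl G G) p.1 := by
  have hsnd : χ (0, p.2) = 1 := DFunLike.congr_fun h p.2
  rw [← Prod.fst_add_snd p, AddChar.map_add_eq_mul, hsnd, mul_one]
  simp

variable [TopologicalSpace G] [SecondCountableTopology G] [MeasurableSpace G] [BorelSpace G]

lemma integral_addChar_eq_zero_of_skewTranslation [PreconnectedSpace G] {s : G}
    (hs : Dense (AddSubgroup.zmultiples s : Set G)) {μ : Measure (G × G)} [IsFiniteMeasure μ]
    (hμ : MeasurePreserving (skewTranslation s) μ μ) {χ : AddChar (G × G) Circle}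
    (hχ : Continuous χ) (hne : χ ≠ 1) : ∫ p, (χ p : ℂ) ∂μ = 0 := by
  have hfst {φ : AddChar G Circle} (hφ : Continuous φ) (hφ_ne : φ ≠ 1) :
      ∫ p, (φ p.1 : ℂ) ∂μ = 0 :=
    integral_addChar_comp_eq_zero hμ hs measurable_fst.aemeasurable (fun _ => rfl) hφ hφ_ne
  let ψ : AddChar G Circle := χ.compAddMonoidHom (.inr G G)
  have hψ : Continuous ψ := hχ.comp (continuous_const.prodMk continuous_id)
  by_cases hψ_one : ψ = 1
  · have hχ_fst := addChar_eq_comp_fst_of_comp_inr_eq_one hψ_one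
    simp only [hχ_fst]
    refine hfst (hχ.comp (continuous_id.prodMk continuous_const)) fun hφ => hne ?_
    ext p
    rw [hχ_fst, hφ, AddChar.one_apply, AddChar.one_apply]
  · refine integral_eq_zero_of_integral_iterate_mul_conj_eq_zero hμ
      (.of_bound (Continuous.aestronglyMeasurable (by fun_prop)) 1
        (.of_forall fun p => (Circle.norm_coe (χ p)).le)) fun n hn => ?_
    have hcorr (p : G × G) : (χ ((skewTranslation s)^[n] p) : ℂ) * conj (χ p : ℂ) =
        (ψ ^ n) p.1 * χ (n • s, n.choose 2 • s) := by
      rw [← Circle.coe_inv_eq_conj, ← Circle.coe_mul, ← Circle.coe_mul,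
        addChar_skewTranslation_iterate, mul_inv_cancel_right]
    simp only [hcorr, integral_mul_const]
    rw [hfst (hψ.pow n) fun h => hψ_one (addChar_eq_one_of_pow_eq_one hψ hn h), zero_mul]

lemma measurePreserving_skewTranslation [IsTopologicalAddGroup G] [CompactSpace G] (s : G)
    (ν : Measure (G × G)) [ν.IsAddHaarMeasure] : MeasurePreserving (skewTranslation s) ν ν := by
  let shear : G × G →+ G × G := (AddMonoidHom.fst G G).prod (.snd G G + .fst G G)
  have hcont : Continuous shear := continuous_fst.prodMk (continuous_snd.add continuous_fst)
  have hsurj : Function.Surjective shear := fun p =>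
    ⟨(p.1, p.2 - p.1), Prod.ext rfl (sub_add_cancel p.2 p.1)⟩
  have hshear : MeasurePreserving shear ν ν := shear.measurePreserving hcont hsurj rfl
  have hcomp : skewTranslation s = (· + (s, 0)) ∘ shear := by
    ext p
    · rfl
    · exact (add_zero _).symm
  rw [hcomp]
  exact (measurePreserving_add_right ν (s, 0)).comp hshear

end SkewTranslation

section Torus

variable {E : Type*} [NormedAddCommGroup E] [NormedSpace ℝ E] [FiniteDimensional ℝ E]

lemma span_eq_top_of_compactSpace_quotient (Λ : AddSubgroup E) [CompactSpace (E ⧸ Λ)] :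
    Submodule.span ℝ (Λ : Set E) = ⊤ := by
  by_contra hspan
  obtain ⟨f, hf_ne, hf⟩ := Submodule.exists_le_ker_of_lt_top _ (lt_top_iff_ne_top.2 hspan)
  let F : E ⧸ Λ →+ ℝ := QuotientAddGroup.lift Λ f.toAddMonoidHom
    fun x hx => hf (Submodule.subset_span hx)
  have hF : Continuous F := f.continuous_of_finiteDimensional.quotient_lift _
  have hF_surj : Function.Surjective F :=
    QuotientAddGroup.lift_surjective_of_surjective Λ _ (f.surjective hf_ne) _
  exact noncompact_univ ℝ (hF_surj.range_eq ▸ isCompact_range hF)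

lemma exists_linearMap_integer_valued_apply_not_integer (Λ : AddSubgroup E) [DiscreteTopology Λ]
    [CompactSpace (E ⧸ Λ)] {v : E} (hv : v ∉ Λ) :
    ∃ f : E →ₗ[ℝ] ℝ, (∀ w ∈ Λ, ∃ n : ℤ, (n : ℝ) = f w) ∧ ¬ ∃ n : ℤ, (n : ℝ) = f v := by
  let L : Submodule ℤ E := AddSubgroup.toIntSubmodule Λ
  have : DiscreteTopology L := ‹DiscreteTopology Λ›
  have : IsZLattice ℝ L := ⟨span_eq_top_of_compactSpace_quotient Λ⟩
  let b := (Module.Free.chooseBasis ℤ L).ofZLatticeBasis ℝ L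
  have hmem (w : E) : w ∈ Λ ↔ ∀ i, ∃ n : ℤ, (n : ℝ) = b.coord i w := by
    have h := b.mem_span_iff_repr_mem ℤ w
    rwa [Module.Basis.ofZLatticeBasis_span] at h
  rw [hmem, not_forall] at hv
  obtain ⟨i, hi⟩ := hv
  exact ⟨b.coord i, fun w hw => (hmem w).1 hw i, hi⟩

lemma charactersSeparatePoints_quotient (Λ : AddSubgroup E) [DiscreteTopology Λ]
    [CompactSpace (E ⧸ Λ)] : CharactersSeparatePoints (E ⧸ Λ) := by
  intro x hx
  obtain ⟨v, rfl⟩ := QuotientAddGroup.mk_surjective x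
  obtain ⟨f, hfΛ, hfv⟩ := exists_linearMap_integer_valued_apply_not_integer Λ
    fun hv => hx ((QuotientAddGroup.eq_zero_iff v).2 hv)
  have hcoe (w : E) : (f w : UnitAddCircle) = 0 ↔ ∃ n : ℤ, (n : ℝ) = f w := by
    simp only [AddCircle.coe_eq_zero_iff, zsmul_one]
  let F : E ⧸ Λ →+ UnitAddCircle := QuotientAddGroup.lift Λ
    ((QuotientAddGroup.mk' _).comp f.toAddMonoidHom) fun w hw => (hcoe w).2 (hfΛ w hw)
  have hF : Continuous F :=
    (continuous_quotient_mk'.comp f.continuous_of_finiteDimensional).quotient_lift _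
  refine ⟨AddCircle.toCircle_addChar.compAddMonoidHom F, AddCircle.continuous_toCircle.comp hF,
    fun h => hfv ((hcoe v).1 (AddCircle.injective_toCircle one_ne_zero ?_))⟩
  rw [AddCircle.toCircle_zero]
  exact h

end Torus

theorem uniquely_ergodic_skew_product_on_complex_torus_general {G : Type*} [AddCommGroup G]
    [TopologicalSpace G] [IsTopologicalAddGroup G] [CompactSpace G] [PreconnectedSpace G]
    [SecondCountableTopology G] [MeasurableSpace G] [BorelSpace G]
    (hG : CharactersSeparatePoints G) {s : G} (hs : Dense (AddSubgroup.zmultiples s : Set G))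
    (ν : Measure (G × G)) [IsProbabilityMeasure ν] [ν.IsAddHaarMeasure] :
    MeasurePreserving (skewTranslation s) ν ν ∧
    ∀ μ : Measure (G × G), IsProbabilityMeasure μ →
      MeasurePreserving (skewTranslation s) μ μ → μ = ν := by
  have := hG.t2Space
  let := TopologicalSpace.metrizableSpaceMetric G
  have hν := measurePreserving_skewTranslation s ν
  refine ⟨hν, fun μ _ hμ => measure_ext_of_integral_addChar_eq (hG.prod hG) fun χ hχ => ?_⟩
  by_cases hχ_one : χ = 1
  · simp only [hχ_one, AddChar.one_apply, Circle.coe_one, integral_const, probReal_univ]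
  · rw [integral_addChar_eq_zero_of_skewTranslation hs hμ hχ hχ_one,
      integral_addChar_eq_zero_of_skewTranslation hs hν hχ hχ_one]

/-- let `Λ` be a lattice in `ℂ` (discrete, with compact quotient) and let
`g(x,y) = (x+s, y+x)` on the torus `(ℂ/Λ)²`.  If `s` generates a dense subgroup of
`ℂ/Λ` (equivalently, every orbit of the translation `x ↦ x+s` is dense), then `g` is
uniquely ergodic: the unique `g`-invariant Borel probability measure is the Haar
measure, i.e. the translation-invariant probability measure `ν`. -/
theorem uniquely_ergodic_skew_product_on_complex_torus
    (Λ : AddSubgroup ℂ) [DiscreteTopology Λ] [CompactSpace (ℂ ⧸ Λ)]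
    [MeasurableSpace (ℂ ⧸ Λ)] [BorelSpace (ℂ ⧸ Λ)]
    (s : ℂ ⧸ Λ)
    (hdense : Dense ((AddSubgroup.zmultiples s : AddSubgroup (ℂ ⧸ Λ)) : Set (ℂ ⧸ Λ)))
    (ν : Measure ((ℂ ⧸ Λ) × (ℂ ⧸ Λ))) [IsProbabilityMeasure ν]
    (hHaar : ∀ a : (ℂ ⧸ Λ) × (ℂ ⧸ Λ), MeasurePreserving (fun z => a + z) ν ν) :
    MeasurePreserving (fun p : (ℂ ⧸ Λ) × (ℂ ⧸ Λ) => (p.1 + s, p.2 + p.1)) ν ν ∧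
    ∀ μ : Measure ((ℂ ⧸ Λ) × (ℂ ⧸ Λ)), IsProbabilityMeasure μ →
      MeasurePreserving (fun p : (ℂ ⧸ Λ) × (ℂ ⧸ Λ) => (p.1 + s, p.2 + p.1)) μ μ →
      μ = ν := by
  have : ConnectedSpace (ℂ ⧸ Λ) := QuotientAddGroup.mk_surjective.connectedSpace continuous_quot_mk
  have : ν.IsAddLeftInvariant := ⟨fun a => (hHaar a).map_eq⟩
  have : ν.IsAddHaarMeasure := Measure.isAddHaarMeasure_of_isCompact_nonempty_interior ν Set.univ
    isCompact_univ (by simp) (by simp) (by simp)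
  exact uniquely_ergodic_skew_product_on_complex_torus_general
    (charactersSeparatePoints_quotient Λ) hdense ν
end
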